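/- arXiv:2309.05377 — 3 statements merged into one kernel-verified Lean document; each statement's English description precedes it below -/
import Mathlib

section
/- Let n ≥ 2 be even and let f : ℝ^n → ℝ be any truthful deterministic mechanism in the unit-length model. Then the approximation ratio of f is at least 2 − 2/n: for every ε > 0 there exist a profile s ∈ ℝ^n and a position c ∈ ℝ such that Σ_{i=1}^n min(1, |c − s_i|) > 0 and Σ_{i=1}^n min(1, |f(s) − s_i|) ≥ (2 − 2/n − ε) · Σ_{i=1}^n min(1, |c − s_i|). -/
/-- A deterministic mechanism `f` is truthful in the unit-length TIC model if no
agent `i` can decrease her cost `min 1 |f s - s i|` by misreporting. -/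
def Truthful {n : ℕ} (f : (Fin n → ℝ) → ℝ) : Prop :=
  ∀ (s : Fin n → ℝ) (i : Fin n) (s' : ℝ),
    min 1 |f s - s i| ≤ min 1 |f (Function.update s i s') - s i|

/-!
Consider profiles in which all agents but one sit at one of two points `a` and `b`. One of these
two points has social cost at most `⌈n / 2⌉`, while an outcome at distance at least `r` from both
has social cost at least `(n - 1) * r`, so it suffices that for every `r < 1` some such outcome
occurs. Otherwise `f` always serves one of the two clusters, and by truthfulness the choice does
not change while a cluster slides along at distance at least `2` from the other one. If `f` serves
the right cluster, this cluster can therefore move on by `2`, leaving one agent behind, and the left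
cluster can catch up with that agent. Hence `f` serves the right cluster however few agents it has,
even none, which is absurd.
-/

open Finset Metric

section SocialCost

variable {ι : Type*} [Fintype ι]

/-- The social cost `SC_s(c)` of the covering interval `[c, c + 1]` at the profile `s`, each agent
being encoded by the left endpoint of her unit interval. -/
noncomputable def socialCost (s : ι → ℝ) (c : ℝ) : ℝ :=
  ∑ i, min 1 |c - s i|

theorem socialCost_nonneg (s : ι → ℝ) (c : ℝ) : 0 ≤ socialCost s c :=
  sum_nonneg fun _ _ => le_min zero_le_one (abs_nonneg _)

theorem socialCost_eq_zero_iff {s : ι → ℝ} {c : ℝ} : socialCost s c = 0 ↔ ∀ i, s i = c := by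
  have cost_eq_zero (x : ℝ) : min 1 |c - x| = 0 ↔ x = c := by
    rw [← sub_eq_zero.trans eq_comm, ← abs_eq_zero]
    grind
  rw [socialCost, sum_eq_zero_iff_of_nonneg fun _ _ => le_min zero_le_one (abs_nonneg _)]
  simp only [mem_univ, true_imp_iff, cost_eq_zero]

theorem socialCost_le_card_ne (s : ι → ℝ) (c : ℝ) : socialCost s c ≤ #{i | s i ≠ c} := by
  rw [card_filter, Nat.cast_sum]
  refine sum_le_sum fun i _ => ?_
  by_cases h : s i = c <;> simp [h]

theorem card_sub_one_mul_le_socialCost {s : ι → ℝ} {c r : ℝ} (hr : r ≤ 1) (j : ι)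
    (h : ∀ i ≠ j, r ≤ |c - s i|) : (Fintype.card ι - 1) * r ≤ socialCost s c := by
  classical
  calc ((Fintype.card ι : ℝ) - 1) * r = #(univ.erase j) • r := by
        rw [nsmul_eq_mul, cast_card_erase_of_mem (mem_univ j), card_univ]
    _ ≤ ∑ i ∈ univ.erase j, min 1 |c - s i| :=
        card_nsmul_le_sum _ _ _ fun i hi => le_min hr (h i (ne_of_mem_erase hi))
    _ ≤ socialCost s c :=
        sum_le_univ_sum_of_nonneg fun _ => le_min zero_le_one (abs_nonneg _)

theorem exists_socialCost_le_of_forall_ne {s : ι → ℝ} {a b : ℝ} {j : ι}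
    (h : ∀ i ≠ j, s i = a ∨ s i = b) :
    ∃ c, socialCost s c ≤ ((Fintype.card ι + 1) / 2 : ℕ) := by
  classical
  have card_add_card_le : #{i | s i ≠ a} + #{i | s i ≠ b} ≤ Fintype.card ι + 1 := by
    have inter_subset : univ.filter (s · ≠ a) ∩ univ.filter (s · ≠ b) ⊆ {j} := by grind
    rw [← card_union_add_card_inter]
    exact add_le_add (card_le_univ _) ((card_le_card inter_subset).trans_eq (card_singleton j))
  obtain ha | hb : #{i | s i ≠ a} ≤ (Fintype.card ι + 1) / 2 ∨
      #{i | s i ≠ b} ≤ (Fintype.card ι + 1) / 2 := by lia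
  · exact ⟨a, (socialCost_le_card_ne s a).trans (mod_cast ha)⟩
  · exact ⟨b, (socialCost_le_card_ne s b).trans (mod_cast hb)⟩

/-- At a unanimous profile the optimum is `0`; shifting it by `1 / 2` gives a positive cost. -/
theorem exists_socialCost_pos_le [Nonempty ι] {s : ι → ℝ} {c M : ℝ} (hM : Fintype.card ι / 2 ≤ M)
    (h : socialCost s c ≤ M) : ∃ c', 0 < socialCost s c' ∧ socialCost s c' ≤ M := by
  obtain hpos | hzero := (socialCost_nonneg s c).lt_or_eq
  · exact ⟨c, hpos, h⟩
  · have shifted_cost : socialCost s (c + 1 / 2) = Fintype.card ι / 2 := by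
      simp only [socialCost, socialCost_eq_zero_iff.1 hzero.symm, add_sub_cancel_left, sum_const,
        card_univ, nsmul_eq_mul]
      norm_num [abs_of_pos, div_eq_mul_inv]
    exact ⟨c + 1 / 2, shifted_cost ▸ by positivity, shifted_cost ▸ hM⟩

end SocialCost

/-- The profile with the first `k` agents at `a`, the next one at `t` and all later ones at `b`,
so that for `t = b` there are just two clusters, one of which may be empty. -/
def clusterProfile (n k : ℕ) (a t b : ℝ) : Fin n → ℝ :=
  fun i => if i < k then a else if i = k then t else b

section ClusterProfile

variable {n : ℕ} (k : ℕ) (a t b x : ℝ)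

theorem clusterProfile_zero : clusterProfile n 0 a b b = fun _ => b := by
  grind [clusterProfile]

theorem clusterProfile_self : clusterProfile n n a t b = fun _ => a := by
  grind [clusterProfile]

theorem clusterProfile_succ : clusterProfile n (k + 1) a b b = clusterProfile n k a a b := by
  grind [clusterProfile]

theorem piecewise_clusterProfile_left :
    ({i : Fin n | i < k} : Finset (Fin n)).piecewise (fun _ => x) (clusterProfile n k a t b) =
      clusterProfile n k x t b := by
  ext i
  by_cases h : i < k <;> simp [clusterProfile, Finset.piecewise, h]

theorem piecewise_clusterProfile_right :
    ({i : Fin n | k < i} : Finset (Fin n)).piecewise (fun _ => x) (clusterProfile n k a t b) =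
      clusterProfile n k a t x := by
  ext i
  grind [clusterProfile, Finset.piecewise]

end ClusterProfile

namespace Truthful

variable {n : ℕ} {f : (Fin n → ℝ) → ℝ}

theorem notMem_ball_piecewise (hf : Truthful f) {s : Fin n → ℝ} {a : ℝ} {S : Finset (Fin n)}
    (hS : ∀ i ∈ S, s i = a) (h : f s ∉ ball a 1) (s' : Fin n → ℝ) :
    f (S.piecewise s' s) ∉ ball a 1 := by
  induction S using Finset.induction_on with
  | empty => rwa [piecewise_empty]
  | insert j S hj ih =>
    have unserved := ih fun i hi => hS i (mem_insert_of_mem hi)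
    have no_gain := hf (S.piecewise s' s) j (s' j)
    rw [piecewise_eq_of_notMem _ _ _ hj, hS j (mem_insert_self j S)] at no_gain
    rw [mem_ball, Real.dist_eq, not_lt] at unserved ⊢
    rw [piecewise_insert]
    exact ((le_min le_rfl unserved).trans no_gain).trans (min_le_right _ _)

/-- While the agents of `S` slide together, a small step of theirs cannot attract the outcome:
it is at distance at least `1` from their old position, hence at least `r` from the new one. -/
theorem mem_ball_of_isPreconnected (hf : Truthful f) {r : ℝ} (hr : r < 1) (S : Finset (Fin n))
    (s : Fin n → ℝ) {w : ℝ} {X : Set ℝ} (hX : IsPreconnected X)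
    (hfar : ∀ x ∈ X, 1 + r ≤ dist x w)
    (hserve : ∀ x ∈ X, f (S.piecewise (fun _ => x) s) ∈ ball x r ∪ ball w r)
    {x y : ℝ} (hx : x ∈ X) (hy : y ∈ X) (h : f (S.piecewise (fun _ => x) s) ∈ ball w r) :
    f (S.piecewise (fun _ => y) s) ∈ ball w r := by
  have small_step {x y : ℝ} (hx : x ∈ X) (hy : y ∈ X) (hxy : dist y x ≤ 1 - r)
      (h : f (S.piecewise (fun _ => x) s) ∈ ball w r) :
      f (S.piecewise (fun _ => y) s) ∈ ball w r := by
    have far_before : f (S.piecewise (fun _ => x) s) ∉ ball x 1 :=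
      (ball_disjoint_ball (hfar x hx)).notMem_of_mem_right h
    have far_after : f (S.piecewise (fun _ => y) s) ∉ ball x 1 := by
      have := hf.notMem_ball_piecewise (fun i hi => piecewise_eq_of_mem S (fun _ => x) s hi)
        far_before (fun _ => y)
      rwa [piecewise_piecewise_of_subset_right subset_rfl] at this
    exact (hserve y hy).resolve_left fun hy' =>
      far_after (ball_subset_ball' (by linarith) hy')
  refine hX.induction₂' (fun x y => f (S.piecewise (fun _ => x) s) ∈ ball w r →
    f (S.piecewise (fun _ => y) s) ∈ ball w r) (fun x hx => ?_)
    (fun _ _ _ _ _ _ hxy hyz => hyz ∘ hxy) hx hy h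
  filter_upwards [self_mem_nhdsWithin,
    mem_nhdsWithin_of_mem_nhds (closedBall_mem_nhds x (sub_pos.2 hr))] with y hy hyx
  exact ⟨small_step hx hy hyx, small_step hy hx (dist_comm x y ▸ hyx)⟩

section Served

variable {r : ℝ} {k : ℕ}

theorem clusterProfile_slide_left (hf : Truthful f) (hr : r < 1) {t b a a' : ℝ}
    (hserve : ∀ x, f (clusterProfile n k x t b) ∈ ball x r ∪ ball b r)
    (ha : a + 2 ≤ b) (ha' : a' + 2 ≤ b) (h : f (clusterProfile n k a t b) ∈ ball b r) :
    f (clusterProfile n k a' t b) ∈ ball b r := by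
  have := hf.mem_ball_of_isPreconnected hr {i : Fin n | i < k} (clusterProfile n k a t b) (w := b)
    (X := Set.Iic (b - 2)) isPreconnected_Iic (x := a) (y := a')
  simp only [piecewise_clusterProfile_left] at this
  refine this (fun x hx => ?_) (fun x _ => hserve x) (by grind) (by grind) h
  grind [Real.dist_eq]

theorem clusterProfile_slide_right (hf : Truthful f) (hr : r < 1) {t a b b' : ℝ}
    (hserve : ∀ x, f (clusterProfile n k a t x) ∈ ball a r ∪ ball x r)
    (hb : a + 2 ≤ b) (hb' : a + 2 ≤ b') (h : f (clusterProfile n k a t b) ∈ ball a r) :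
    f (clusterProfile n k a t b') ∈ ball a r := by
  have := hf.mem_ball_of_isPreconnected hr {i : Fin n | k < i} (clusterProfile n k a t b) (w := a)
    (X := Set.Ici (a + 2)) isPreconnected_Ici (x := b) (y := b')
  simp only [piecewise_clusterProfile_right] at this
  refine this (fun x hx => ?_) (fun x _ => (hserve x).symm) (by grind) (by grind) h
  grind [Real.dist_eq]

theorem clusterProfile_succ_mem_ball (hf : Truthful f) (hr : r < 1)
    (hserve : ∀ a t b, f (clusterProfile n k a t b) ∈ ball a r ∪ ball b r)
    (h : ∀ a, f (clusterProfile n k a (a + 2) (a + 2)) ∈ ball (a + 2) r) (a : ℝ) :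
    f (clusterProfile n (k + 1) a (a + 2) (a + 2)) ∈ ball (a + 2) r := by
  have start := h (a - 2)
  rw [sub_add_cancel] at start
  have right_served : f (clusterProfile n k (a - 2) a (a + 2)) ∈ ball (a + 2) r := by
    refine (hserve _ _ _).resolve_left fun left_served => ?_
    have := hf.clusterProfile_slide_right hr (hserve _ _) (b' := a) (by linarith) (by linarith)
      left_served
    exact (ball_disjoint_ball (by grind [Real.dist_eq])).notMem_of_mem_left this start
  rw [clusterProfile_succ]
  exact hf.clusterProfile_slide_left hr (hserve · _ _) (by linarith) le_rfl right_served

end Served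

theorem exists_clusterProfile_notMem_ball (hf : Truthful f) (hn : 0 < n) {r : ℝ} (hr : r < 1) :
    ∃ k < n, ∃ a t b,
      f (clusterProfile n k a t b) ∉ ball a r ∧ f (clusterProfile n k a t b) ∉ ball b r := by
  by_contra! hcon
  have hserve : ∀ k < n, ∀ a t b, f (clusterProfile n k a t b) ∈ ball a r ∪ ball b r :=
    fun k hk a t b => or_iff_not_imp_left.2 (hcon k hk a t b)
  have unanimous (a : ℝ) : f (fun _ => a) ∈ ball a r := by
    simpa only [clusterProfile_zero, Set.union_self] using hserve 0 hn a a a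
  have right_served : ∀ k ≤ n, ∀ a, f (clusterProfile n k a (a + 2) (a + 2)) ∈ ball (a + 2) r := by
    intro k
    induction k with
    | zero => exact fun _ a => clusterProfile_zero a (a + 2) ▸ unanimous (a + 2)
    | succ k ih =>
      exact fun hk => hf.clusterProfile_succ_mem_ball hr (hserve k hk) (ih (Nat.le_of_succ_le hk))
  have empty_cluster_served := right_served n le_rfl 0
  rw [clusterProfile_self] at empty_cluster_served
  exact (ball_disjoint_ball (by grind [Real.dist_eq])).notMem_of_mem_left (unanimous 0)
    empty_cluster_served

theorem exists_socialCost_le_and_le_socialCost (hf : Truthful f) (hn : 0 < n) {r : ℝ} (hr : r < 1) :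
    ∃ s c, 0 < socialCost s c ∧ socialCost s c ≤ ((n + 1) / 2 : ℕ) ∧
      (n - 1) * r ≤ socialCost s (f s) := by
  have : NeZero n := ⟨hn.ne'⟩
  obtain ⟨k, hk, a, t, b, ha, hb⟩ := hf.exists_clusterProfile_notMem_ball hn hr
  set s := clusterProfile n k a t b
  have two_valued : ∀ i ≠ (⟨k, hk⟩ : Fin n), s i = a ∨ s i = b := by
    grind [clusterProfile]
  obtain ⟨c₀, hc₀⟩ := exists_socialCost_le_of_forall_ne two_valued
  have half_le : (Fintype.card (Fin n) : ℝ) / 2 ≤ ((Fintype.card (Fin n) + 1) / 2 : ℕ) := by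
    rw [div_le_iff₀ two_pos]
    exact_mod_cast (by lia)
  obtain ⟨c, hpos, hle⟩ := exists_socialCost_pos_le half_le hc₀
  rw [mem_ball, not_lt, Real.dist_eq] at ha hb
  have unserved : ∀ i ≠ (⟨k, hk⟩ : Fin n), r ≤ |f s - s i| := by
    intro i hi
    rcases two_valued i hi with h | h <;> rwa [h]
  have cost_ge := card_sub_one_mul_le_socialCost hr.le _ unserved
  rw [Fintype.card_fin] at hle cost_ge
  exact ⟨s, c, hpos, hle, cost_ge⟩

end Truthful

/-- The natural-number quotient `(n + 1) / 2` is `⌈n / 2⌉`. -/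
theorem deterministic_lower_bound_general {n : ℕ} (hn : 0 < n) {f : (Fin n → ℝ) → ℝ}
    (hf : Truthful f) {ε : ℝ} (hε : 0 < ε) :
    ∃ s c, 0 < socialCost s c ∧
      ((n - 1) / ((n + 1) / 2 : ℕ) - ε) * socialCost s c ≤ socialCost s (f s) := by
  obtain ⟨s, c, hpos, hle, cost_ge⟩ :=
    hf.exists_socialCost_le_and_le_socialCost hn (r := 1 - ε / 2) (by linarith)
  refine ⟨s, c, hpos, ?_⟩
  have n_le : (n : ℝ) ≤ 2 * ((n + 1) / 2 : ℕ) := by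
    exact_mod_cast (by lia : n ≤ 2 * ((n + 1) / 2))
  set M : ℝ := (((n + 1) / 2 : ℕ) : ℝ)
  obtain hρ | hρ := le_total ((n - 1) / M - ε) 0
  · exact (mul_nonpos_of_nonpos_of_nonneg hρ hpos.le).trans (socialCost_nonneg _ _)
  calc ((n - 1) / M - ε) * socialCost s c ≤ ((n - 1) / M - ε) * M := by gcongr
    _ = n - 1 - ε * M := by rw [sub_mul, div_mul_cancel₀ _ (hpos.trans_le hle).ne']
    _ ≤ (n - 1) * (1 - ε / 2) := by nlinarith
    _ ≤ socialCost s (f s) := cost_ge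

theorem sub_one_div_succ_div_two_of_even {n : ℕ} (hn : 0 < n) (hev : Even n) :
    ((n : ℝ) - 1) / ((n + 1) / 2 : ℕ) = 2 - 2 / n := by
  obtain ⟨m, rfl⟩ := hev
  have half_eq : (m + m + 1) / 2 = m := by lia
  have hm : (m : ℝ) ≠ 0 := Nat.cast_ne_zero.2 (by lia)
  rw [half_eq]
  push_cast
  field_simp
  ring

/-- Every deterministic truthful mechanism for the unit-length Truthful Interval
Covering problem with an even number `n ≥ 2` of agents has approximation ratio at
least `2 - 2/n`: for every `ε > 0` there is a profile `s` and a position `c` with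
positive social cost such that the social cost of the mechanism is at least
`(2 - 2/n - ε)` times the social cost of `c`. -/
theorem deterministic_lower_bound (n : ℕ) (hn : 2 ≤ n) (hev : Even n)
    (f : (Fin n → ℝ) → ℝ) (hf : Truthful f) (ε : ℝ) (hε : 0 < ε) :
    ∃ (s : Fin n → ℝ) (c : ℝ),
      0 < (∑ i, min 1 |c - s i|) ∧
      (2 - 2 / (n : ℝ) - ε) * (∑ i, min 1 |c - s i|) ≤ ∑ i, min 1 |f s - s i| := by
  rw [← sub_one_div_succ_div_two_of_even (by lia) hev]
  exact deterministic_lower_bound_general (by lia) hf hε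
end

section
/- Let n ≥ 6 be divisible by 6 and let s ∈ ℝ^n be a profile in the unit-length model. Let ℓ = o_{n/3}(s), m = o_{n/2}(s), and r = o_{2n/3}(s) be the (n/3)-th, (n/2)-th, and (2n/3)-th smallest entries of s, respectively. Then for every c ∈ ℝ, (1/3)·(SC_s(ℓ) + SC_s(m) + SC_s(r)) ≤ (5/3) · SC_s(c), where SC_s(x) = Σ_{i=1}^n min(1, |x − s_i|); that is, the Uniform-Statistic mechanism, which places the covering interval at each of ℓ, m, r with probability 1/3, has approximation ratio at most 5/3 for the expected social cost. -/
/-- The `k`-th ordered statistic (0-indexed) of a profile `s` of left endpoints. -/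
noncomputable def oStat {n : ℕ} (s : Fin n → ℝ) (k : Fin n) : ℝ :=
  s (Tuple.sort s k)

/-!
The cost `d x y = min 1 |x - y|` enters only through its symmetry, the triangle inequality, and the
fact that it does not decrease when the interval between its arguments grows.

Let `A`, `B`, `E` be the costs from `c` to `l`, `m`, `r`. By reflection assume `c ≤ m`. For an
agent at `x`, each of `d l x`, `d m x`, `d r x` is at most the cost of the anchor to `c`, at
most `d c x`, or at most their sum, depending on the order of the three points. Hence the excess
`d l x + d m x + d r x - 5 * d c x` is bounded in the four blocks cut out by `l ≤ m ≤ r` by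

* `A + B + E`, `B + E - 4 * A`, `E - 3 * B`, `-2 * E` when `c ≤ l`;
* `B + E - 2 * A`, `A + B + E`, `A + E - 3 * B`, `A - 2 * E` when `l ≤ c ≤ m`.

The blocks hold 2/6, 1/6, 1/6 and 2/6 of the agents, and with weights 2, 1, 1, 2 the bounds add up
to `-2 * A` and `0`.
-/

/-- A real-valued dissimilarity on a linear order that is compatible with the order: a symmetric
function satisfying the triangle inequality that does not increase when its second argument
is moved towards the first. It abstracts the cost `min 1 |x - y|`. -/
structure IsMonotoneDist {α : Type*} [LinearOrder α] (d : α → α → ℝ) : Prop where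
  comm : ∀ x y, d x y = d y x
  triangle : ∀ x y z, d x z ≤ d x y + d y z
  mono : ∀ {x y z}, y ∈ Set.uIcc x z → d x y ≤ d x z

/-- The amount by which the three placements `l`, `m`, `r` together cost an agent at `x` more than
five times the placement `c`. The approximation ratio `5 / 3` says that the total excess over all
agents is nonpositive. -/
def excess {α : Type*} (d : α → α → ℝ) (l m r c x : α) : ℝ :=
  d l x + d m x + d r x - 5 * d c x

section MonotoneDist

variable {α : Type*} [LinearOrder α] {d : α → α → ℝ}

namespace IsMonotoneDist

lemma nonneg (hd : IsMonotoneDist d) (x y : α) : 0 ≤ d x y := by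
  linarith [hd.triangle x y x, hd.triangle x x y, hd.comm x y]

lemma le_add (hd : IsMonotoneDist d) (c x y : α) : d y x ≤ d c y + d c x :=
  hd.comm c y ▸ hd.triangle y c x

lemma le_of_left_mem_uIcc (hd : IsMonotoneDist d) {c x y : α} (hy : y ∈ Set.uIcc c x) :
    d y x ≤ d c x := by
  rw [hd.comm y x, hd.comm c x]
  exact hd.mono (Set.uIcc_comm c x ▸ hy)

lemma le_of_right_mem_uIcc (hd : IsMonotoneDist d) {c x y : α} (hx : x ∈ Set.uIcc c y) :
    d y x ≤ d c y :=
  hd.comm y x ▸ hd.le_of_left_mem_uIcc hx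

lemma dual (hd : IsMonotoneDist d) :
    IsMonotoneDist fun x y : αᵒᵈ => d (OrderDual.ofDual x) (OrderDual.ofDual y) where
  comm _ _ := hd.comm _ _
  triangle _ _ _ := hd.triangle _ _ _
  mono h := hd.mono (by rwa [Set.uIcc_ofDual])

end IsMonotoneDist

variable {a b c e f l m r : α}

lemma excess_blocks_nonpos_of_le_left (hd : IsMonotoneDist d) (hcl : c ≤ l) (hlb : l ≤ b)
    (hbm : b ≤ m) (hme : m ≤ e) (her : e ≤ r) (hrf : r ≤ f) :
    2 * excess d l m r c a + excess d l m r c b + excess d l m r c e + 2 * excess d l m r c f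
      ≤ 0 := by
  have hcb := hcl.trans hlb
  have hcm := hcb.trans hbm
  have hce := hcm.trans hme
  have hcr := hce.trans her
  have ha : excess d l m r c a ≤ d c l + d c m + d c r := by
    unfold excess
    linarith [hd.le_add c a l, hd.le_add c a m, hd.le_add c a r, hd.nonneg c a]
  have hb : excess d l m r c b ≤ d c m + d c r - 4 * d c l := by
    unfold excess
    linarith [hd.le_of_left_mem_uIcc (Set.mem_uIcc_of_le hcl hlb),
      hd.le_of_right_mem_uIcc (Set.mem_uIcc_of_le hcb hbm),
      hd.le_of_right_mem_uIcc (Set.mem_uIcc_of_le hcb (hbm.trans (hme.trans her))),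
      hd.mono (Set.mem_uIcc_of_le hcl hlb)]
  have he : excess d l m r c e ≤ d c r - 3 * d c m := by
    unfold excess
    linarith [hd.le_of_left_mem_uIcc (Set.mem_uIcc_of_le hcl (hlb.trans (hbm.trans hme))),
      hd.le_of_left_mem_uIcc (Set.mem_uIcc_of_le hcm hme),
      hd.le_of_right_mem_uIcc (Set.mem_uIcc_of_le hce her),
      hd.mono (Set.mem_uIcc_of_le hcm hme)]
  have hf : excess d l m r c f ≤ -2 * d c r := by
    unfold excess
    linarith [
      hd.le_of_left_mem_uIcc (Set.mem_uIcc_of_le hcl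
        (hlb.trans (hbm.trans (hme.trans (her.trans hrf))))),
      hd.le_of_left_mem_uIcc (Set.mem_uIcc_of_le hcm (hme.trans (her.trans hrf))),
      hd.le_of_left_mem_uIcc (Set.mem_uIcc_of_le hcr hrf),
      hd.mono (Set.mem_uIcc_of_le hcr hrf)]
  linarith [hd.nonneg c l]

lemma excess_blocks_nonpos_of_mem_Icc (hd : IsMonotoneDist d) (hlc : l ≤ c) (hcm : c ≤ m)
    (hal : a ≤ l) (hme : m ≤ e) (her : e ≤ r) (hrf : r ≤ f) :
    2 * excess d l m r c a + excess d l m r c b + excess d l m r c e + 2 * excess d l m r c f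
      ≤ 0 := by
  have hce := hcm.trans hme
  have hcr := hce.trans her
  have ha : excess d l m r c a ≤ d c m + d c r - 2 * d c l := by
    unfold excess
    linarith [hd.le_of_left_mem_uIcc (Set.mem_uIcc_of_ge hal hlc), hd.le_add c a m, hd.le_add c a r,
      hd.mono (Set.mem_uIcc_of_ge hal hlc)]
  have hb : excess d l m r c b ≤ d c l + d c m + d c r := by
    unfold excess
    linarith [hd.le_add c b l, hd.le_add c b m, hd.le_add c b r, hd.nonneg c b]
  have he : excess d l m r c e ≤ d c l + d c r - 3 * d c m := by
    unfold excess
    linarith [hd.le_add c e l, hd.le_of_left_mem_uIcc (Set.mem_uIcc_of_le hcm hme),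
      hd.le_of_right_mem_uIcc (Set.mem_uIcc_of_le hce her), hd.mono (Set.mem_uIcc_of_le hcm hme)]
  have hf : excess d l m r c f ≤ d c l - 2 * d c r := by
    unfold excess
    linarith [hd.le_add c f l,
      hd.le_of_left_mem_uIcc (Set.mem_uIcc_of_le hcm (hme.trans (her.trans hrf))),
      hd.le_of_left_mem_uIcc (Set.mem_uIcc_of_le hcr hrf), hd.mono (Set.mem_uIcc_of_le hcr hrf)]
  linarith

lemma excess_blocks_nonpos_of_le_mid (hd : IsMonotoneDist d) (hcm : c ≤ m) (hal : a ≤ l)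
    (hlb : l ≤ b) (hbm : b ≤ m) (hme : m ≤ e) (her : e ≤ r) (hrf : r ≤ f) :
    2 * excess d l m r c a + excess d l m r c b + excess d l m r c e + 2 * excess d l m r c f
      ≤ 0 := by
  rcases le_total c l with hcl | hlc
  · exact excess_blocks_nonpos_of_le_left hd hcl hlb hbm hme her hrf
  · exact excess_blocks_nonpos_of_mem_Icc hd hlc hcm hal hme her hrf

lemma excess_blocks_nonpos (hd : IsMonotoneDist d) (c : α) (hal : a ≤ l) (hlb : l ≤ b)
    (hbm : b ≤ m) (hme : m ≤ e) (her : e ≤ r) (hrf : r ≤ f) :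
    2 * excess d l m r c a + excess d l m r c b + excess d l m r c e + 2 * excess d l m r c f
      ≤ 0 := by
  rcases le_total c m with hcm | hmc
  · exact excess_blocks_nonpos_of_le_mid hd hcm hal hlb hbm hme her hrf
  · have reflected := excess_blocks_nonpos_of_le_mid hd.dual (OrderDual.toDual_le_toDual.2 hmc)
      (OrderDual.toDual_le_toDual.2 hrf) (OrderDual.toDual_le_toDual.2 her)
      (OrderDual.toDual_le_toDual.2 hme) (OrderDual.toDual_le_toDual.2 hbm)
      (OrderDual.toDual_le_toDual.2 hlb) (OrderDual.toDual_le_toDual.2 hal)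
    simp only [excess, OrderDual.ofDual_toDual] at reflected ⊢
    linarith

end MonotoneDist

lemma sum_nonpos_of_blocks_nonpos {q : ℕ} {g : Fin (6 * q) → ℝ}
    (hg : ∀ i j k p : Fin (6 * q), (i : ℕ) < 2 * q → 2 * q ≤ (j : ℕ) → (j : ℕ) < 3 * q →
      3 * q ≤ (k : ℕ) → (k : ℕ) < 4 * q → 4 * q ≤ (p : ℕ) →
      2 * g i + g j + g k + 2 * g p ≤ 0) :
    ∑ i, g i ≤ 0 := by
  rw [← finProdFinEquiv.sum_comp, Fintype.sum_prod_type_right]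
  refine Finset.sum_nonpos fun t _ => ?_
  rw [Fin.sum_univ_six]
  -- The sextuple `t, t + q, …, t + 5 * q` meets the four blocks in 2, 1, 1 and 2 points; its sum is
  -- the average of two instances of `hg`.
  let u (v : Fin 6) : Fin (6 * q) := finProdFinEquiv (v, t)
  have hu (v : Fin 6) : (u v : ℕ) = t + q * v := rfl
  have h₀ := hg (u 0) (u 2) (u 3) (u 4)
  have h₁ := hg (u 1) (u 2) (u 3) (u 5)
  simp only [hu] at h₀ h₁
  linarith [h₀ (by grind) (by grind) (by grind) (by grind) (by grind) (by grind),
    h₁ (by grind) (by grind) (by grind) (by grind) (by grind) (by grind)]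

lemma sum_excess_nonpos {α : Type*} [LinearOrder α] {d : α → α → ℝ} (hd : IsMonotoneDist d)
    {q : ℕ} {x : Fin (6 * q) → α} (hx : Monotone x) {i j k : Fin (6 * q)}
    (hi : (i : ℕ) + 1 = 2 * q) (hj : (j : ℕ) + 1 = 3 * q) (hk : (k : ℕ) + 1 = 4 * q) (c : α) :
    ∑ t, excess d (x i) (x j) (x k) c (x t) ≤ 0 :=
  sum_nonpos_of_blocks_nonpos fun _ _ _ _ _ _ _ _ _ _ =>
    excess_blocks_nonpos hd c (hx (by omega)) (hx (by omega)) (hx (by omega)) (hx (by omega))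
      (hx (by omega)) (hx (by omega))

theorem uniform_statistic_approx_general {α : Type*} [LinearOrder α] {d : α → α → ℝ}
    (hd : IsMonotoneDist d) {n : ℕ} (hn : 0 < n) (h6 : 6 ∣ n) (s : Fin n → α) (c : α) :
    (1 / 3 : ℝ) *
        ((∑ i, d (s (Tuple.sort s ⟨n / 3 - 1, by omega⟩)) (s i)) +
          (∑ i, d (s (Tuple.sort s ⟨n / 2 - 1, by omega⟩)) (s i)) +
          (∑ i, d (s (Tuple.sort s ⟨2 * n / 3 - 1, by omega⟩)) (s i))) ≤
      (5 / 3 : ℝ) * ∑ i, d c (s i) := by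
  obtain ⟨q, rfl⟩ := h6
  have sorted_sum := sum_excess_nonpos hd (Tuple.monotone_sort s)
    (i := ⟨6 * q / 3 - 1, by omega⟩) (j := ⟨6 * q / 2 - 1, by omega⟩)
    (k := ⟨2 * (6 * q) / 3 - 1, by omega⟩) (by grind) (by grind) (by grind) c
  simp only [Function.comp_apply] at sorted_sum
  rw [Equiv.sum_comp (Tuple.sort s) fun i => excess d _ _ _ c (s i)] at sorted_sum
  simp only [excess, Finset.sum_sub_distrib, Finset.sum_add_distrib, ← Finset.mul_sum]
    at sorted_sum
  linarith

lemma isMonotoneDist_min_abs_sub {t : ℝ} (ht : 0 ≤ t) :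
    IsMonotoneDist fun x y : ℝ => min t |x - y| where
  comm x y := by rw [abs_sub_comm]
  triangle x y z := by
    have := abs_sub_le x y z
    have := abs_nonneg (x - y)
    have := abs_nonneg (y - z)
    grind
  mono {x y z} hy := by
    rw [abs_sub_comm x y, abs_sub_comm x z]
    exact min_le_min_left t (Set.abs_sub_left_of_mem_uIcc hy)

/-- The Uniform-Statistic mechanism, which places the covering interval at each of
the `(n/3)`-th, `(n/2)`-th and `(2n/3)`-th smallest reports with probability `1/3`,
has approximation ratio at most `5/3` for the expected social cost in the
unit-length Truthful Interval Covering model. -/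
theorem uniform_statistic_approx (n : ℕ) (hn : 6 ≤ n) (hd : 6 ∣ n)
    (s : Fin n → ℝ) (c : ℝ) :
    (1 / 3 : ℝ) *
        ((∑ i, min 1 |oStat s ⟨n / 3 - 1, by omega⟩ - s i|) +
          (∑ i, min 1 |oStat s ⟨n / 2 - 1, by omega⟩ - s i|) +
          (∑ i, min 1 |oStat s ⟨2 * n / 3 - 1, by omega⟩ - s i|)) ≤
      (5 / 3 : ℝ) * ∑ i, min 1 |c - s i| := by
  exact uniform_statistic_approx_general (isMonotoneDist_min_abs_sub zero_le_one) (by omega) hd s c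
end

section
/- Let n ≥ 2 be even and let s ∈ ℝ^n be a profile in the unit-length model. Define the social welfare of a position c as SW_s(c) = Σ_{i=1}^n max(0, 1 − |c − s_i|) (the total covered length of the agents' intervals), and let m = o_{n/2}(s) be the (n/2)-th smallest entry of s. Then for every c ∈ ℝ, SW_s(c) ≤ (n/2) · SW_s(m); that is, the Median mechanism achieves approximation ratio at most n/2 for the social welfare objective. -/
/-!
Let `m` be the location of an agent and `d` the utility of that agent when the cover is at `c`. An
agent at least as far from `c` as `m` is has utility at most `d` at `c`, and by the triangle
inequality any agent has at most `1 - d` more utility at `c` than at `m`. At most half of the agents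
are strictly closer to `c` than a median `m` is. Using the second bound for these agents only if
`d ≤ 1 / 2`, and for everyone but `m` if `d ≥ 1 / 2`, the total is at most `n / 2` plus the utility
of the agents other than `m` at `m`, while `m` itself contributes `1` to the welfare at `m`.
-/

/-- The utility of an agent at `x` when the covering object is placed at `c`. On `ℝ` this is the
length of `[x, x + 1] ∩ [c, c + 1]`; only the distance matters, so `X` is any pseudometric space. -/
noncomputable def coverage {X : Type*} [PseudoMetricSpace X] (c x : X) : ℝ :=
  max 0 (1 - dist c x)

/-- The social welfare `SW_s(c)` of the position `c` for the profile `s`. -/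
noncomputable def welfare {ι X : Type*} [Fintype ι] [PseudoMetricSpace X] (s : ι → X) (c : X) : ℝ :=
  ∑ i, coverage c (s i)

section Coverage

variable {X : Type*} [PseudoMetricSpace X]

lemma coverage_nonneg (c x : X) : 0 ≤ coverage c x :=
  le_max_left _ _

lemma coverage_le_one (c x : X) : coverage c x ≤ 1 :=
  max_le zero_le_one (sub_le_self 1 dist_nonneg)

lemma coverage_self (x : X) : coverage x x = 1 := by
  simp [coverage]

lemma coverage_le_coverage_of_dist_le {c x y : X} (h : dist c x ≤ dist c y) :
    coverage c y ≤ coverage c x :=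
  max_le_max_left 0 (sub_le_sub_left h 1)

-- The triangle inequality for the truncated distance `1 - coverage c x = min 1 (dist c x)`.
lemma coverage_add_coverage_le (c x y : X) :
    coverage c x + coverage c y ≤ 1 + coverage x y := by
  have triangle : dist x y ≤ dist c x + dist c y := dist_triangle_left x y c
  have hx : 0 ≤ dist c x := dist_nonneg
  have hy : 0 ≤ dist c y := dist_nonneg
  unfold coverage
  grind

end Coverage

section Welfare

open Finset

variable {ι X : Type*} [Fintype ι] [PseudoMetricSpace X] {s : ι → X} {c : X}

lemma one_add_sum_coverage_le_welfare {j : ι} {B : Finset ι} (hj : j ∉ B) :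
    1 + ∑ i ∈ B, coverage (s j) (s i) ≤ welfare s (s j) := by
  calc 1 + ∑ i ∈ B, coverage (s j) (s i)
      = ∑ i ∈ cons j B hj, coverage (s j) (s i) := by rw [sum_cons, coverage_self]
    _ ≤ welfare s (s j) := sum_le_univ_sum_of_nonneg fun i ↦ coverage_nonneg (s j) (s i)

lemma welfare_le_of_forall_notMem_dist_le [DecidableEq ι] {m : X} {B : Finset ι}
    (hfar : ∀ i ∉ B, dist c m ≤ dist c (s i)) :
    welfare s c ≤
      #Bᶜ * coverage c m + #B * (1 - coverage c m) + ∑ i ∈ B, coverage m (s i) := by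
  have far : ∑ i ∈ Bᶜ, coverage c (s i) ≤ #Bᶜ * coverage c m := by
    rw [← nsmul_eq_mul]
    exact sum_le_card_nsmul _ _ _ fun i hi ↦
      coverage_le_coverage_of_dist_le (hfar i (mem_compl.1 hi))
  have near : ∑ i ∈ B, coverage c (s i) ≤
      #B * (1 - coverage c m) + ∑ i ∈ B, coverage m (s i) := by
    rw [← nsmul_eq_mul, ← sum_const, ← sum_add_distrib]
    exact sum_le_sum fun i _ ↦ by linarith [coverage_add_coverage_le c m (s i)]
  rw [welfare, ← sum_compl_add_sum B]
  linarith

lemma welfare_le_mul_welfare_of_forall_notMem_dist_le [DecidableEq ι] {j : ι} {B : Finset ι}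
    {r : ℝ} (hr : 1 ≤ r) (hj : j ∉ B) (hfar : ∀ i ∉ B, dist c (s j) ≤ dist c (s i))
    (hB : #Bᶜ * coverage c (s j) + #B * (1 - coverage c (s j)) ≤ r) :
    welfare s c ≤ r * welfare s (s j) := by
  have others_nonneg : 0 ≤ ∑ i ∈ B, coverage (s j) (s i) :=
    sum_nonneg fun i _ ↦ coverage_nonneg (s j) (s i)
  calc welfare s c
      ≤ #Bᶜ * coverage c (s j) + #B * (1 - coverage c (s j)) +
          ∑ i ∈ B, coverage (s j) (s i) := welfare_le_of_forall_notMem_dist_le hfar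
    _ ≤ r + r * ∑ i ∈ B, coverage (s j) (s i) :=
        add_le_add hB (le_mul_of_one_le_left others_nonneg hr)
    _ = r * (1 + ∑ i ∈ B, coverage (s j) (s i)) := by ring
    _ ≤ r * welfare s (s j) := by gcongr; exact one_add_sum_coverage_le_welfare hj

theorem welfare_le_mul_welfare_of_card_closer_le {j : ι} {r : ℝ} (hr : 1 ≤ r)
    (hcard : Fintype.card ι ≤ 2 * r) (hcloser : #{i | dist c (s i) < dist c (s j)} ≤ r) :
    welfare s c ≤ r * welfare s (s j) := by
  classical
  set d := coverage c (s j)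
  have card_compl (B : Finset ι) : (#Bᶜ : ℝ) = Fintype.card ι - #B :=
    eq_sub_of_add_eq' (mod_cast card_add_card_compl B)
  -- The bound `#Bᶜ * d + #B * (1 - d)` increases with `#B` iff `d < 1 / 2`, so one of the two
  -- extreme choices of `B` works.
  rcases le_total d (1 / 2) with hd | hd
  · set closer : Finset ι := {i | dist c (s i) < dist c (s j)}
    refine welfare_le_mul_welfare_of_forall_notMem_dist_le (B := closer) hr (by simp [closer])
      (by simp [closer]) ?_
    have d_nonneg : 0 ≤ d := coverage_nonneg c (s j)
    have weight_nonneg : 0 ≤ 1 - 2 * d := by linarith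
    calc #closerᶜ * d + #closer * (1 - d)
        = Fintype.card ι * d + #closer * (1 - 2 * d) := by rw [card_compl]; ring
      _ ≤ 2 * r * d + r * (1 - 2 * d) := by gcongr
      _ = r := by ring
  · refine welfare_le_mul_welfare_of_forall_notMem_dist_le (B := {j}ᶜ) hr (by simp) (by simp) ?_
    have weight_nonneg : 0 ≤ 1 - d := sub_nonneg.2 (coverage_le_one c (s j))
    have excess_nonneg : 0 ≤ 2 * d - 1 := by linarith
    calc #({j}ᶜᶜ : Finset ι) * d + #({j}ᶜ : Finset ι) * (1 - d)
        = Fintype.card ι * (1 - d) + 1 * (2 * d - 1) := by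
          rw [compl_compl, card_compl, card_singleton]; push_cast; ring
      _ ≤ 2 * r * (1 - d) + r * (2 * d - 1) := by gcongr
      _ = r := by ring

end Welfare

section OrderStatistic

open Finset

variable {n : ℕ} (s : Fin n → ℝ) (k : Fin n)

lemma card_lt_oStat_le : #{i | s i < oStat s k} ≤ k := by
  have subset : ({i | s i < oStat s k} : Finset (Fin n)) ⊆
      (Iio k).map (Tuple.sort s).toEmbedding := by
    intro i hi
    obtain ⟨l, rfl⟩ := (Tuple.sort s).surjective i
    have hlk : s (Tuple.sort s l) < oStat s k := (mem_filter.1 hi).2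
    exact mem_map_of_mem _ (mem_Iio.2 ((Tuple.monotone_sort s).reflect_lt hlk))
  simpa using card_le_card subset

lemma card_oStat_lt_le : #{i | oStat s k < s i} ≤ n - 1 - k := by
  have subset : ({i | oStat s k < s i} : Finset (Fin n)) ⊆
      (Ioi k).map (Tuple.sort s).toEmbedding := by
    intro i hi
    obtain ⟨l, rfl⟩ := (Tuple.sort s).surjective i
    have hkl : oStat s k < s (Tuple.sort s l) := (mem_filter.1 hi).2
    exact mem_map_of_mem _ (mem_Ioi.2 ((Tuple.monotone_sort s).reflect_lt hkl))
  simpa using card_le_card subset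

lemma card_closer_oStat_le (c : ℝ) :
    #{i | dist c (s i) < dist c (oStat s k)} ≤ max (k : ℕ) (n - 1 - k) := by
  simp only [Real.dist_eq]
  rcases le_total c (oStat s k) with hc | hc
  · have lt_of_closer : ∀ i, |c - s i| < |c - oStat s k| → s i < oStat s k := by grind
    exact le_max_of_le_left <| (card_le_card <| monotone_filter_right _ fun i _ ↦
      lt_of_closer i).trans (card_lt_oStat_le s k)
  · have gt_of_closer : ∀ i, |c - s i| < |c - oStat s k| → oStat s k < s i := by grind
    exact le_max_of_le_right <| (card_le_card <| monotone_filter_right _ fun i _ ↦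
      gt_of_closer i).trans (card_oStat_lt_le s k)

end OrderStatistic

theorem median_welfare_approx_general {n : ℕ} (s : Fin n → ℝ) (k : Fin n) {r : ℝ} (hr : 1 ≤ r)
    (hn : n ≤ 2 * r) (hk : (max (k : ℕ) (n - 1 - k) : ℕ) ≤ r) (c : ℝ) :
    welfare s c ≤ r * welfare s (oStat s k) :=
  welfare_le_mul_welfare_of_card_closer_le hr (by simpa using hn)
    ((Nat.cast_le.2 (card_closer_oStat_le s k c)).trans hk)

/-- In the unit-length Truthful Interval Covering model with social welfare
`SW_s(c) = ∑ i, max 0 (1 - |c - s i|)` (total covered length), the Median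
mechanism achieves an approximation ratio of at most `n/2`: for every position `c`,
`SW_s(c) ≤ (n/2) · SW_s(m)` where `m` is the `(n/2)`-th smallest report. -/
theorem median_welfare_approx (n : ℕ) (hn : 2 ≤ n) (hev : Even n)
    (s : Fin n → ℝ) (c : ℝ) :
    (∑ i, max 0 (1 - |c - s i|)) ≤
      ((n : ℝ) / 2) * ∑ i, max 0 (1 - |oStat s ⟨n / 2 - 1, by omega⟩ - s i|) := by
  have hn' : (2 : ℝ) ≤ n := mod_cast hn
  have rank_le : max (n / 2 - 1) (n - 1 - (n / 2 - 1)) ≤ n / 2 := by grind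
  exact median_welfare_approx_general s ⟨n / 2 - 1, by omega⟩ (by linarith) (by linarith)
    ((Nat.cast_le.2 rank_le).trans Nat.cast_div_le) c
end
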